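/- Let a ≥ c ≥ 0 be integers and let q be a nonzero complex number with q^j ≠ 1 for all 1 ≤ j ≤ a. Then Σ_{b=c}^{a} (−1)^{b+c} · q^{(b(b+1) + c(c+1))/2} / ((q;q)_{a−b}·(q;q)_{b−c}) = q^{c²+c} · (q;q)_a / ((q;q)_c·(q;q)_{a−c}). -/

import Mathlib

/-- The finite q-Pochhammer symbol `(q;q)_n = ∏_{i=1}^n (1 - q^i)` (as `(x;q)_n` at `x = q`). -/
noncomputable def qPoch (q x : ℂ) (n : ℕ) : ℂ := ∏ i ∈ Finset.range n, (1 - x * q ^ i)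

theorem qPoch_ne (q : ℂ) (n : ℕ) (h : ∀ j : ℕ, 1 ≤ j → j ≤ n → q ^ j ≠ 1) (m : ℕ) (hm : m ≤ n) :
    qPoch q q m ≠ 0 := by
  unfold qPoch
  rw [Finset.prod_ne_zero_iff]
  intro i hi
  have hi' := Finset.mem_range.mp hi
  have := h (i + 1) (by omega) (by omega)
  rw [sub_ne_zero, ← pow_succ']
  exact this.symm

theorem qPoch_succ (q x : ℂ) (n : ℕ) : qPoch q x (n + 1) = qPoch q x n * (1 - x * q ^ n) := by
  simp [qPoch, Finset.prod_range_succ]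

noncomputable def qTerm (q x : ℂ) (n k : ℕ) : ℂ :=
  (-1) ^ k * q ^ (k.choose 2) * x ^ k / (qPoch q q (n - k) * qPoch q q k)

theorem qBinom (q x : ℂ) (n : ℕ) (h : ∀ j : ℕ, 1 ≤ j → j ≤ n → q ^ j ≠ 1) :
    ∑ k ∈ Finset.range (n + 1), qTerm q x n k = qPoch q x n / qPoch q q n := by
  induction n with
  | zero => simp [qTerm, qPoch]
  | succ n ih =>
    have ih' := ih (fun j h1 h2 => h j h1 (by omega))
    have hne := qPoch_ne q (n + 1) h
    have hn : (1 - q ^ (n + 1)) ≠ 0 := sub_ne_zero.mpr (h (n + 1) (by omega) le_rfl).symm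
    have e1 : (1 - q ^ (n + 1)) * ∑ k ∈ Finset.range (n + 1 + 1), qTerm q x (n + 1) k
        = ∑ k ∈ Finset.range (n + 1 + 1), (1 - q ^ (n + 1 - k)) * qTerm q x (n + 1) k
        + ∑ k ∈ Finset.range (n + 1 + 1),
            q ^ (n + 1 - k) * (1 - q ^ k) * qTerm q x (n + 1) k := by
      rw [Finset.mul_sum, ← Finset.sum_add_distrib]
      refine Finset.sum_congr rfl fun k hk => ?_
      have hk' := Finset.mem_range.mp hk
      have : q ^ (n + 1) = q ^ (n + 1 - k) * q ^ k := by rw [← pow_add]; congr 1; omega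
      rw [this]; ring
    have e2 : ∑ k ∈ Finset.range (n + 1 + 1), (1 - q ^ (n + 1 - k)) * qTerm q x (n + 1) k
        = ∑ k ∈ Finset.range (n + 1), qTerm q x n k := by
      rw [Finset.sum_range_succ]
      simp only [Nat.sub_self, pow_zero, sub_self, zero_mul, add_zero]
      refine Finset.sum_congr rfl fun k hk => ?_
      have hk' := Finset.mem_range.mp hk
      obtain ⟨m, rfl⟩ : ∃ m, n = k + m := ⟨n - k, by omega⟩
      have s1 : k + m + 1 - k = m + 1 := by omega
      have s2 : k + m - k = m := by omega
      have p1 := hne (m + 1) (by omega)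
      have p3 := hne k (by omega)
      unfold qTerm
      rw [s1, s2]
      rw [qPoch_succ, ← pow_succ'] at *
      have p2 := left_ne_zero_of_mul p1
      have p4 := right_ne_zero_of_mul p1
      field_simp
    have e3 : ∑ k ∈ Finset.range (n + 1 + 1),
            q ^ (n + 1 - k) * (1 - q ^ k) * qTerm q x (n + 1) k
        = - (x * q ^ n) * ∑ k ∈ Finset.range (n + 1), qTerm q x n k := by
      rw [Finset.sum_range_succ', Finset.mul_sum]
      simp only [pow_zero, sub_self, mul_zero, zero_mul, add_zero]
      refine Finset.sum_congr rfl fun k hk => ?_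
      have hk' := Finset.mem_range.mp hk
      obtain ⟨m, rfl⟩ : ∃ m, n = k + m := ⟨n - k, by omega⟩
      have s1 : k + m + 1 - (k + 1) = m := by omega
      have s2 : k + m - k = m := by omega
      have s3 : (k + 1).choose 2 = k + k.choose 2 := by
        rw [Nat.choose_succ_succ' k 1, Nat.choose_one_right]
      have p1 := hne (k + 1) (by omega)
      have p3 := hne m (by omega)
      unfold qTerm
      rw [s1, s2, s3]
      rw [qPoch_succ, ← pow_succ'] at *
      have p2 := left_ne_zero_of_mul p1
      have p4 := right_ne_zero_of_mul p1
      field_simp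
      ring
    rw [e2, e3, ih'] at e1
    apply mul_left_cancel₀ hn
    rw [e1]
    have p1 := hne n (by omega)
    rw [qPoch_succ, qPoch_succ, ← pow_succ']
    field_simp
    ring

theorem qPoch_shift (q : ℂ) (c n : ℕ) :
    qPoch q q (c + n) = qPoch q q c * qPoch q (q ^ (c + 1)) n := by
  unfold qPoch
  rw [Finset.prod_range_add]
  congr 1
  refine Finset.prod_congr rfl fun i _ => ?_
  ring

theorem stmt_17 (a c : ℕ) (hca : c ≤ a) (q : ℂ) (hq0 : q ≠ 0)
    (hq : ∀ j : ℕ, 1 ≤ j → j ≤ a → q ^ j ≠ 1) :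
    ∑ b ∈ Finset.Icc c a,
        (-1 : ℂ) ^ (b + c) * q ^ ((b * (b + 1) + c * (c + 1)) / 2) /
          (qPoch q q (a - b) * qPoch q q (b - c))
      = q ^ (c ^ 2 + c) * qPoch q q a / (qPoch q q c * qPoch q q (a - c)) := by
  obtain ⟨n, rfl⟩ := Nat.exists_eq_add_of_le hca
  have hne := qPoch_ne q (c + n) hq
  have hb := qBinom q (q ^ (c + 1)) n (fun j h1 h2 => hq j h1 (by omega))
  have p1 := hne c (by omega)
  have p2 := hne n (by omega)
  have : q ^ (c ^ 2 + c) * qPoch q q (c + n) / (qPoch q q c * qPoch q q (c + n - c))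
      = q ^ (c ^ 2 + c) * (qPoch q (q ^ (c + 1)) n / qPoch q q n) := by
    rw [qPoch_shift, Nat.add_sub_cancel_left]
    field_simp
  rw [this, ← hb, Finset.mul_sum, ← Finset.Ico_add_one_right_eq_Icc, Finset.sum_Ico_eq_sum_range]
  have s0 : c + n + 1 - c = n + 1 := by omega
  rw [s0]
  refine Finset.sum_congr rfl fun k hk => ?_
  have s1 : c + n - (c + k) = n - k := by omega
  have s2 : c + k - c = k := by omega
  have s3 : ((c + k) * (c + k + 1) + c * (c + 1)) / 2 = (c ^ 2 + c) + k.choose 2 + (c + 1) * k := by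
    have h2 : k.choose 2 * 2 + k = k * k := by
      clear hk s1 s2
      induction k with
      | zero => simp
      | succ k ih =>
        rw [Nat.choose_succ_succ' k 1, Nat.choose_one_right]
        linarith
    apply Nat.div_eq_of_eq_mul_left (by norm_num)
    linarith
  have s4 : (-1 : ℂ) ^ (c + k + c) = (-1) ^ k := by
    rw [show c + k + c = 2 * c + k by ring, pow_add, pow_mul]; simp
  unfold qTerm
  rw [s1, s2, s3, s4, pow_add, pow_add, pow_mul]
  ring
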